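/- arXiv:2509.01638 — 2 statements merged into one kernel-verified Lean document; each statement's English description precedes it below -/
import Mathlib

section
/- Let R be a commutative ring, S a multiplicative subset of R, M an R-module, and K a submodule of M. Suppose the S-torsion submodule tor_S(M) is u-S-torsion. Then K is u-S-essential in M if and only if for every x ∈ M with x ∉ tor_S(M) and every s ∈ S, there exists r ∈ R such that r • x ∈ K and s • (r • x) ≠ 0. -/
/-- `K` is a uniformly `S`-essential submodule of `M`: whenever a submodule `L`
satisfies `s₁ • (K ⊓ L) = 0` for some `s₁ ∈ S`, then `s₂ • L = 0` for some `s₂ ∈ S`. -/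
def USEssential {R : Type*} [CommRing R] (S : Submonoid R) {M : Type*}
    [AddCommGroup M] [Module R M] (K : Submodule R M) : Prop :=
  ∀ L : Submodule R M,
    (∃ s ∈ S, ∀ x ∈ K ⊓ L, s • x = 0) → ∃ s ∈ S, ∀ x ∈ L, s • x = 0

open Submodule

section Torsion

variable {R : Type*} [CommSemiring R] {M : Type*} [AddCommMonoid M] [Module R M]
  {S : Submonoid R}

/-- A submodule `L` is uniformly `S`-torsion (u-`S`-torsion) if a single element of `S` annihilates
it, in contrast with `L ≤ torsion' R M S`, where the element of `S` may depend on `x ∈ L`. -/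
def IsUSTorsion (S : Submonoid R) (L : Submodule R M) : Prop :=
  ∃ s ∈ S, ∀ x ∈ L, s • x = 0

theorem mem_torsion'_iff_exists_mem {x : M} : x ∈ torsion' R M S ↔ ∃ t ∈ S, t • x = 0 := by
  simp only [mem_torsion'_iff, Subtype.exists, Submonoid.mk_smul, exists_prop]

theorem IsUSTorsion.mono {L N : Submodule R M} (hN : IsUSTorsion S N) (hLN : L ≤ N) :
    IsUSTorsion S L :=
  let ⟨s, hs, hsN⟩ := hN
  ⟨s, hs, fun x hx ↦ hsN x (hLN hx)⟩

theorem IsUSTorsion.le_torsion' {L : Submodule R M} (hL : IsUSTorsion S L) :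
    L ≤ torsion' R M S :=
  let ⟨s, hs, hsL⟩ := hL
  fun x hx ↦ mem_torsion'_iff_exists_mem.mpr ⟨s, hs, hsL x hx⟩

theorem isUSTorsion_inf_span_singleton_iff {K : Submodule R M} {x : M} :
    IsUSTorsion S (K ⊓ R ∙ x) ↔ ∃ s ∈ S, ∀ r : R, r • x ∈ K → s • (r • x) = 0 := by
  refine exists_congr fun s ↦ and_congr_right fun _ ↦ ⟨fun hs r hr ↦ ?_, ?_⟩
  · exact hs _ ⟨hr, smul_mem _ r (mem_span_singleton_self x)⟩
  · rintro hs y ⟨hyK, hyx⟩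
    obtain ⟨r, rfl⟩ := mem_span_singleton.mp hyx
    exact hs r hyK

theorem le_torsion'_of_isUSTorsion_inf {K : Submodule R M}
    (hK : ∀ x : M, IsUSTorsion S (K ⊓ R ∙ x) → x ∈ torsion' R M S)
    {L : Submodule R M} (hL : IsUSTorsion S (K ⊓ L)) : L ≤ torsion' R M S := fun x hx ↦
  hK x <| hL.mono <| inf_le_inf_left K <| (span_singleton_le_iff_mem x L).mpr hx

end Torsion

section Essential

variable {R : Type*} [CommRing R] {M : Type*} [AddCommGroup M] [Module R M]
  {S : Submonoid R} {K : Submodule R M}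

theorem USEssential.mem_torsion' (hK : USEssential S K) {x : M}
    (hx : IsUSTorsion S (K ⊓ R ∙ x)) : x ∈ torsion' R M S :=
  have hspan : IsUSTorsion S (R ∙ x) := hK _ hx
  hspan.le_torsion' (mem_span_singleton_self x)

-- The test on cyclic submodules bounds each `x ∈ L` separately; `htor` makes the bound uniform.
theorem uSEssential_iff_forall_span_singleton (htor : IsUSTorsion S (torsion' R M S)) :
    USEssential S K ↔ ∀ x : M, IsUSTorsion S (K ⊓ R ∙ x) → x ∈ torsion' R M S :=
  ⟨fun hK _ ↦ hK.mem_torsion',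
    fun hK _ hL ↦ htor.mono (le_torsion'_of_isUSTorsion_inf hK hL)⟩

end Essential

/-- Theorem (prop7): if `tor_S(M)` is u-S-torsion, then `K` is u-S-essential in `M`
iff for every `x ∈ M ∖ tor_S(M)` and every `s ∈ S` there exists `r ∈ R` with
`r • x ∈ K` and `s • (r • x) ≠ 0`. -/
theorem uSEssential_iff_of_torsion {R : Type*} [CommRing R] [Nontrivial R] (S : Submonoid R)
    (hS0 : (0 : R) ∉ S) {M : Type*} [AddCommGroup M] [Module R M]
    (htor : ∃ s ∈ S, ∀ m : M, (∃ t ∈ S, t • m = 0) → s • m = 0)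
    (K : Submodule R M) :
    USEssential S K ↔
      ∀ x : M, (¬ ∃ t ∈ S, t • x = 0) → ∀ s ∈ S,
        ∃ r : R, r • x ∈ K ∧ s • (r • x) ≠ 0 := by
  have htorsion : IsUSTorsion S (torsion' R M S) := by
    simpa only [IsUSTorsion, mem_torsion'_iff_exists_mem] using htor
  rw [uSEssential_iff_forall_span_singleton htorsion]
  refine forall_congr' fun x ↦ ?_
  rw [isUSTorsion_inf_span_singleton_iff, mem_torsion'_iff_exists_mem, ← not_imp_not]
  simp only [not_exists, not_and, not_forall, exists_prop, ne_eq]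
end

section
/- Let R be a commutative ring, S a multiplicative subset of R, M an R-module, and N a u-S-essential submodule of M with inclusion map i_N : N → M. If i : M → E is a u-S-injective u-S-envelope of M, then the composition i ∘ i_N : N → E is a u-S-injective u-S-envelope of N (in particular, E_{u-S}(N) is u-S-isomorphic to E_{u-S}(M)). -/
/-!
For `f : M → E` with `E` u-S-injective, `f` is a u-S-injective u-S-envelope exactly when it is a
u-S-monomorphism whose range is u-S-essential in `E`. A u-S-monomorphism `f` has u-S-essential range
exactly when every `g` with `g ∘ f` a u-S-monomorphism is one, so u-S-monomorphisms with
u-S-essential range are closed under composition.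

If `f` is an envelope and `L` is a submodule of `E` such that `π ∘ f : M → E ⧸ L` is a
u-S-monomorphism, then some `r • f` with `r ∈ S` factors as `g ∘ π ∘ f`, so `g ∘ π` is a
u-S-isomorphism and `π` is a u-S-monomorphism. Conversely, let `f` be a u-S-monomorphism with
u-S-essential range and `s • f = α ∘ f` for some `s ∈ S`. Then `α` is a u-S-monomorphism, so
`β ∘ α = r • id` for some `β` and `r ∈ S`. Since `β ∘ (s • f) = r • f`, also `β` is a
u-S-monomorphism; as it kills `α (β y) - r • y` for every `y`, the map `α` is a u-S-epimorphism.
-/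

universe u

/-- `f` is a u-S-monomorphism: its kernel is u-S-torsion. -/
def IsUSMono {R : Type*} [CommRing R] (S : Submonoid R) {M N : Type*}
    [AddCommGroup M] [Module R M] [AddCommGroup N] [Module R N] (f : M →ₗ[R] N) : Prop :=
  ∃ s ∈ S, ∀ x ∈ LinearMap.ker f, s • x = 0

/-- `f` is a u-S-epimorphism: its cokernel is u-S-torsion. -/
def IsUSEpi {R : Type*} [CommRing R] (S : Submonoid R) {M N : Type*}
    [AddCommGroup M] [Module R M] [AddCommGroup N] [Module R N] (f : M →ₗ[R] N) : Prop :=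
  ∃ s ∈ S, ∀ y : N, s • y ∈ LinearMap.range f

/-- `f` is a u-S-isomorphism: both a u-S-monomorphism and a u-S-epimorphism. -/
def IsUSIso {R : Type*} [CommRing R] (S : Submonoid R) {M N : Type*}
    [AddCommGroup M] [Module R M] [AddCommGroup N] [Module R N] (f : M →ₗ[R] N) : Prop :=
  IsUSMono S f ∧ IsUSEpi S f

/-- `E` is u-S-injective: for every u-S-monomorphism `f : A → B` there is `s ∈ S` such
that every `h : A → E` factors as `s • h = g ∘ f` for some `g : B → E`. -/
def IsUSInjective {R : Type u} [CommRing R] (S : Submonoid R) (E : Type u)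
    [AddCommGroup E] [Module R E] : Prop :=
  ∀ (A B : Type u) [AddCommGroup A] [Module R A] [AddCommGroup B] [Module R B]
    (f : A →ₗ[R] B), IsUSMono S f →
      ∃ s ∈ S, ∀ h : A →ₗ[R] E, ∃ g : B →ₗ[R] E, s • h = g ∘ₗ f

/-- `f : M → E` with `E` u-S-injective is a u-S-injective u-S-preenvelope of `M`:
for every u-S-injective `E'` there is `s ∈ S` such that every `h : M → E'` factors
as `s • h = g ∘ f` for some `g : E → E'`. -/
def USInjPreenvelope {R : Type u} [CommRing R] (S : Submonoid R) {M E : Type u}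
    [AddCommGroup M] [Module R M] [AddCommGroup E] [Module R E] (f : M →ₗ[R] E) : Prop :=
  IsUSInjective S E ∧
    ∀ (E' : Type u) [AddCommGroup E'] [Module R E'], IsUSInjective S E' →
      ∃ s ∈ S, ∀ h : M →ₗ[R] E', ∃ g : E →ₗ[R] E', s • h = g ∘ₗ f

/-- A u-S-injective u-S-preenvelope `f : M → E` is a u-S-injective u-S-envelope if every
endomorphism `α` of `E` with `s • f = α ∘ f` for some `s ∈ S` is a u-S-isomorphism. -/
def USInjEnvelope {R : Type u} [CommRing R] (S : Submonoid R) {M E : Type u}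
    [AddCommGroup M] [Module R M] [AddCommGroup E] [Module R E] (f : M →ₗ[R] E) : Prop :=
  USInjPreenvelope S f ∧
    ∀ α : E →ₗ[R] E, (∃ s ∈ S, s • f = α ∘ₗ f) → IsUSIso S α

section USMono

variable {R : Type*} [CommRing R] {S : Submonoid R} {M N P : Type*} [AddCommGroup M] [Module R M]
  [AddCommGroup N] [Module R N] [AddCommGroup P] [Module R P] {f : M →ₗ[R] N} {g : N →ₗ[R] P}

theorem IsUSMono.of_injective (hf : Function.Injective f) : IsUSMono S f :=
  ⟨1, S.one_mem, fun x hx => by rw [one_smul, (map_eq_zero_iff f hf).1 hx]⟩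

theorem IsUSMono.comp (hg : IsUSMono S g) (hf : IsUSMono S f) : IsUSMono S (g ∘ₗ f) := by
  obtain ⟨t, ht, hgt⟩ := hg
  obtain ⟨s, hs, hfs⟩ := hf
  refine ⟨s * t, S.mul_mem hs ht, fun x hx => ?_⟩
  rw [mul_smul]
  exact hfs _ (by rw [LinearMap.mem_ker, map_smul, hgt (f x) hx])

theorem IsUSMono.of_comp (hgf : IsUSMono S (g ∘ₗ f)) : IsUSMono S f := by
  obtain ⟨s, hs, hker⟩ := hgf
  exact ⟨s, hs, fun x hx => hker x (LinearMap.ker_le_ker_comp f g hx)⟩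

theorem IsUSMono.smul (hf : IsUSMono S f) {r : R} (hr : r ∈ S) : IsUSMono S (r • f) := by
  obtain ⟨s, hs, hker⟩ := hf
  refine ⟨s * r, S.mul_mem hs hr, fun x hx => ?_⟩
  rw [mul_smul]
  exact hker _ (by rwa [LinearMap.mem_ker, map_smul])

theorem IsUSMono.of_smul {r : R} (hf : IsUSMono S (r • f)) : IsUSMono S f := by
  obtain ⟨s, hs, hker⟩ := hf
  refine ⟨s, hs, fun x hx => hker x ?_⟩
  rw [LinearMap.mem_ker, LinearMap.smul_apply, LinearMap.mem_ker.1 hx, smul_zero]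

theorem IsUSMono.isUSEpi_of_smul_id_eq_comp {h : N →ₗ[R] M} (hh : IsUSMono S h) {r : R} (hr : r ∈ S)
    (hhf : r • LinearMap.id = h ∘ₗ f) : IsUSEpi S f := by
  obtain ⟨s, hs, hker⟩ := hh
  have h_apply (x : M) : h (f x) = r • x := (LinearMap.congr_fun hhf x).symm
  refine ⟨s * r, S.mul_mem hs hr, fun y => ⟨s • h y, ?_⟩⟩
  have hsub : s • (f (h y) - r • y) = 0 :=
    hker _ (by rw [LinearMap.mem_ker, map_sub, h_apply, map_smul, sub_self])
  rw [map_smul, mul_smul, ← sub_eq_zero, ← smul_sub, hsub]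

end USMono

section USEssential

variable {R : Type*} [CommRing R] {S : Submonoid R} {M N P : Type*} [AddCommGroup M] [Module R M]
  [AddCommGroup N] [Module R N] [AddCommGroup P] [Module R P] {f : M →ₗ[R] N} {g : N →ₗ[R] P}

theorem USEssential.isUSMono_of_comp (hf : USEssential S (LinearMap.range f))
    (hgf : IsUSMono S (g ∘ₗ f)) : IsUSMono S g := by
  obtain ⟨s, hs, hker⟩ := hgf
  refine hf (LinearMap.ker g) ⟨s, hs, ?_⟩
  rintro _ ⟨⟨x, rfl⟩, hx⟩
  rw [← map_smul, hker x hx, map_zero]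

theorem uSEssential_range_of_isUSMono_mkQ (hf : IsUSMono S f)
    (h : ∀ L : Submodule R N, IsUSMono S (L.mkQ ∘ₗ f) → IsUSMono S L.mkQ) :
    USEssential S (LinearMap.range f) := by
  rintro L ⟨s, hs, hL⟩
  obtain ⟨t, ht, hker⟩ := hf
  have hcomp : IsUSMono S (L.mkQ ∘ₗ f) := by
    refine ⟨t * s, S.mul_mem ht hs, fun x hx => ?_⟩
    have hfx : f x ∈ L := (Submodule.Quotient.mk_eq_zero L).1 hx
    rw [mul_smul]
    exact hker _ (by rw [LinearMap.mem_ker, map_smul, hL (f x) ⟨⟨x, rfl⟩, hfx⟩])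
  simpa only [IsUSMono, Submodule.ker_mkQ] using h L hcomp

theorem USEssential.range_comp (hg : USEssential S (LinearMap.range g)) (hgm : IsUSMono S g)
    (hf : USEssential S (LinearMap.range f)) (hfm : IsUSMono S f) :
    USEssential S (LinearMap.range (g ∘ₗ f)) :=
  uSEssential_range_of_isUSMono_mkQ (hgm.comp hfm) fun _ hL =>
    hg.isUSMono_of_comp (hf.isUSMono_of_comp hL)

end USEssential

universe v

theorem exists_injective_linearMap_module_injective (R : Type u) [Ring R] (M : Type v) [Small.{v} R]
    [AddCommGroup M] [Module R M] :
    ∃ (J : Type v) (_ : AddCommGroup J) (_ : Module R J) (_ : Module.Injective R J)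
      (j : M →ₗ[R] J), Function.Injective j := by
  let J := CategoryTheory.Injective.under (ModuleCat.of R M)
  let ι : ModuleCat.of R M ⟶ J := CategoryTheory.Injective.ι (ModuleCat.of R M)
  have hJ : Module.Injective R J :=
    (Module.injective_iff_injective_object R J).2
      (CategoryTheory.Injective.injective_under (ModuleCat.of R M))
  exact ⟨J, _, _, hJ, ι.hom, (ModuleCat.mono_iff_injective ι).1 inferInstance⟩

section USInjective

variable {R : Type u} [CommRing R] {S : Submonoid R} {M N E : Type u} [AddCommGroup M] [Module R M]
  [AddCommGroup N] [Module R N] [AddCommGroup E] [Module R E]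

theorem IsUSInjective.of_injective [Module.Injective R E] : IsUSInjective S E := by
  rintro A B _ _ _ _ f ⟨s, hs, hf⟩
  refine ⟨s, hs, fun h => ?_⟩
  have hker : LinearMap.ker f ≤ LinearMap.ker (s • h) := fun x hx => by
    rw [LinearMap.mem_ker, LinearMap.smul_apply, ← map_smul, hf x hx, map_zero]
  have hinj : Function.Injective ((LinearMap.ker f).liftQ f le_rfl) :=
    LinearMap.ker_eq_bot.1 (Submodule.ker_liftQ_eq_bot _ _ _ le_rfl)
  obtain ⟨g, hg⟩ := Module.Injective.extension_property R E _ _ _ hinj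
    ((LinearMap.ker f).liftQ (s • h) hker)
  refine ⟨g, ?_⟩
  rw [← Submodule.liftQ_mkQ _ _ hker, ← hg, LinearMap.comp_assoc, Submodule.liftQ_mkQ]

theorem IsUSInjective.uSInjPreenvelope (hE : IsUSInjective S E) {f : M →ₗ[R] E}
    (hf : IsUSMono S f) : USInjPreenvelope S f :=
  ⟨hE, fun _ _ _ hE' => hE' M E f hf⟩

theorem USInjPreenvelope.isUSMono {f : M →ₗ[R] E} (hf : USInjPreenvelope S f) : IsUSMono S f := by
  obtain ⟨J, _, _, _, j, hj⟩ := exists_injective_linearMap_module_injective R M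
  obtain ⟨s, hs, hfac⟩ := hf.2 J IsUSInjective.of_injective
  obtain ⟨g, hg⟩ := hfac j
  have hgf : IsUSMono S (g ∘ₗ f) := hg ▸ (IsUSMono.of_injective hj).smul hs
  exact hgf.of_comp

theorem USInjEnvelope.uSEssential_range {f : M →ₗ[R] E} (hf : USInjEnvelope S f) :
    USEssential S (LinearMap.range f) := by
  refine uSEssential_range_of_isUSMono_mkQ hf.1.isUSMono fun L hL => ?_
  obtain ⟨r, hr, hfac⟩ := hf.1.1 M (E ⧸ L) (L.mkQ ∘ₗ f) hL
  obtain ⟨g, hg⟩ := hfac f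
  have hiso : IsUSIso S (g ∘ₗ L.mkQ) := hf.2 _ ⟨r, hr, hg⟩
  exact hiso.1.of_comp

theorem IsUSInjective.isUSIso_of_smul_eq_comp (hE : IsUSInjective S E) {f : M →ₗ[R] E}
    (hf : IsUSMono S f) (hfr : USEssential S (LinearMap.range f)) {α : E →ₗ[R] E} {s : R}
    (hs : s ∈ S) (hα : s • f = α ∘ₗ f) : IsUSIso S α := by
  have hαm : IsUSMono S α := hfr.isUSMono_of_comp (hα ▸ hf.smul hs)
  obtain ⟨r, hr, hfac⟩ := hE E E α hαm
  obtain ⟨β, hβ⟩ := hfac LinearMap.id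
  have hβf : s • (β ∘ₗ f) = r • f := by
    rw [← LinearMap.comp_smul, hα, ← LinearMap.comp_assoc, ← hβ, LinearMap.smul_comp,
      LinearMap.id_comp]
  have hβm : IsUSMono S β := hfr.isUSMono_of_comp (IsUSMono.of_smul (hβf ▸ hf.smul hr))
  exact ⟨hαm, hβm.isUSEpi_of_smul_id_eq_comp hr hβ⟩

theorem uSInjEnvelope_iff {f : M →ₗ[R] E} : USInjEnvelope S f ↔
    IsUSInjective S E ∧ IsUSMono S f ∧ USEssential S (LinearMap.range f) :=
  ⟨fun hf => ⟨hf.1.1, hf.1.isUSMono, hf.uSEssential_range⟩, fun ⟨hE, hfm, hfr⟩ =>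
    ⟨hE.uSInjPreenvelope hfm, fun _ ⟨_, hs, hα⟩ => hE.isUSIso_of_smul_eq_comp hfm hfr hs hα⟩⟩

theorem uSInjEnvelope_comp_subtype_of_uSEssential_general {f : N →ₗ[R] M} (hf : IsUSMono S f)
    (hfr : USEssential S (LinearMap.range f)) {i : M →ₗ[R] E} (hi : USInjEnvelope S i) :
    USInjEnvelope S (i ∘ₗ f) := by
  obtain ⟨hE, him, hir⟩ := uSInjEnvelope_iff.1 hi
  exact uSInjEnvelope_iff.2 ⟨hE, him.comp hf, hir.range_comp him hfr hf⟩

end USInjective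

/-- Proposition (prop11 (2)): if `N` is a u-S-essential submodule of `M` and
`i : M → E` is a u-S-injective u-S-envelope of `M`, then `i ∘ i_N : N → E` is a
u-S-injective u-S-envelope of `N` (hence `E_{u-S}(N)` is u-S-isomorphic to `E_{u-S}(M)`). -/
theorem uSInjEnvelope_comp_subtype_of_uSEssential {R : Type u} [CommRing R] [Nontrivial R]
    (S : Submonoid R) (hS0 : (0 : R) ∉ S) {M E : Type u} [AddCommGroup M] [Module R M]
    [AddCommGroup E] [Module R E] (N : Submodule R M) (hN : USEssential S N)
    (i : M →ₗ[R] E) (hi : USInjEnvelope S i) :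
    USInjEnvelope S (i ∘ₗ N.subtype) :=
  uSInjEnvelope_comp_subtype_of_uSEssential_general
    (IsUSMono.of_injective N.subtype_injective) (by rwa [Submodule.range_subtype]) hi
end
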